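/- arXiv:2302.08879 — 2 statements merged into one kernel-verified Lean document; each statement's English description precedes it below -/
import Mathlib

section
/- Let B be a symplectic form on a 2J-dimensional vector space V over F_2. Suppose Q₁, Q₂, Q₃, Q₄ are quadratic forms yielding B whose quadrics all have the same cardinality, with Q₁ ≠ Q₂ and Q₃ ≠ Q₄. Then there exists a linear automorphism A of V preserving B (i.e., B(Ax, Ay) = B(x,y) for all x, y ∈ V) such that Q₃(v) = Q₁(A⁻¹v) and Q₄(v) = Q₂(A⁻¹v) for all v ∈ V. In other words, the action (A·Q)(v) := Q(A⁻¹v) of the symplectic group Sp(B) on the set of all quadratic forms yielding B of either given sign is doubly transitive. -/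
noncomputable section

/-- A bilinear form is symplectic: alternating and nondegenerate. -/
def IsSymplectic {F V : Type*} [CommRing F] [AddCommGroup V] [Module F V]
    (B : V →ₗ[F] V →ₗ[F] F) : Prop :=
  (∀ v, B v v = 0) ∧ ∀ v : V, v ≠ 0 → ∃ w, B v w ≠ 0

/-- `Q` is a quadratic form yielding the bilinear form `B` over `F₂`. -/
def YieldsForm {V : Type*} [AddCommGroup V] [Module (ZMod 2) V]
    (B : V →ₗ[ZMod 2] V →ₗ[ZMod 2] ZMod 2) (Q : V → ZMod 2) : Prop :=
  ∀ v₁ v₂ : V, Q (v₁ + v₂) + Q v₁ + Q v₂ = B v₁ v₂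

/-- The quadric of a quadratic form: its set of zeros. -/
def quadric {V : Type*} (Q : V → ZMod 2) : Set V := {v | Q v = 0}

universe u

def chi2 (x : ZMod 2) : ℤ := if x = 0 then 1 else -1

lemma chi2_add : ∀ x y : ZMod 2, chi2 (x + y) = chi2 x * chi2 y := by decide

def gsum {V : Type*} [Fintype V] (Q : V → ZMod 2) : ℤ := ∑ v, chi2 (Q v)

lemma gsum_eq_ncard {V : Type*} [Fintype V] (Q : V → ZMod 2) :
    gsum Q = 2 * ((quadric Q).ncard : ℤ) - Fintype.card V := by
  classical
  have h : (quadric Q).ncard = (Finset.univ.filter (fun v => Q v = 0)).card := by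
    rw [← Set.ncard_coe_finset]; congr 1; ext v; simp [quadric]
  have h2 : ∀ v, chi2 (Q v) = 2 * (if Q v = 0 then 1 else 0) - 1 := by
    intro v; unfold chi2; split_ifs <;> norm_num
  unfold gsum
  rw [h, Finset.sum_congr rfl (fun v _ => h2 v), Finset.sum_sub_distrib, ← Finset.mul_sum]
  simp

lemma zmod2_cases : ∀ x : ZMod 2, x = 0 ∨ x = 1 := by decide

lemma add_self_V {V : Type*} [AddCommGroup V] [Module (ZMod 2) V] (v : V) : v + v = 0 := by
  have : ((1 : ZMod 2) + 1) • v = v + v := by rw [add_smul, one_smul]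
  rw [← this, show (1 : ZMod 2) + 1 = 0 from rfl, zero_smul]

lemma YF_add {V : Type*} [AddCommGroup V] [Module (ZMod 2) V]
    {B : V →ₗ[ZMod 2] V →ₗ[ZMod 2] ZMod 2} {Q : V → ZMod 2} (h : YieldsForm B Q) (v w : V) :
    Q (v + w) = Q v + Q w + B v w := by
  rw [← h v w]
  generalize Q (v + w) = a
  generalize Q v = b
  generalize Q w = c
  revert a b c; decide

lemma YF_zero {V : Type*} [AddCommGroup V] [Module (ZMod 2) V]
    {B : V →ₗ[ZMod 2] V →ₗ[ZMod 2] ZMod 2} {Q : V → ZMod 2} (h : YieldsForm B Q) : Q 0 = 0 := by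
  have := YF_add h 0 0
  simpa using this

lemma B_symm {V : Type*} [AddCommGroup V] [Module (ZMod 2) V]
    {B : V →ₗ[ZMod 2] V →ₗ[ZMod 2] ZMod 2} (hB : IsSymplectic B) (v w : V) : B v w = B w v := by
  have h := hB.1 (v + w)
  simp only [map_add, LinearMap.add_apply, hB.1 v, hB.1 w] at h
  revert h
  generalize B v w = a
  generalize B w v = b
  revert a b; decide

lemma gsum_sq {V : Type*} [AddCommGroup V] [Module (ZMod 2) V] [Fintype V]
    {B : V →ₗ[ZMod 2] V →ₗ[ZMod 2] ZMod 2} (hB : IsSymplectic B) {Q : V → ZMod 2}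
    (h : YieldsForm B Q) : gsum Q * gsum Q = Fintype.card V := by
  classical
  have key : ∀ w : V, w ≠ 0 → ∑ v, chi2 (B v w) = 0 := by
    intro w hw
    obtain ⟨u, hu⟩ := hB.2 w hw
    have hu1 : B u w = 1 := by
      rw [B_symm hB]; exact (zmod2_cases _).resolve_left hu
    have : ∑ v, chi2 (B v w) = ∑ v, chi2 (B (v + u) w) :=
      (Fintype.sum_equiv (Equiv.addRight u) _ _ (fun v => rfl)).symm
    simp only [map_add, LinearMap.add_apply, chi2_add, hu1] at this
    have h1 : chi2 1 = -1 := by decide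
    simp only [h1, mul_neg_one, Finset.sum_neg_distrib] at this
    linarith
  have : gsum Q * gsum Q = ∑ w : V, ∑ v : V, chi2 (Q w) * chi2 (B v w) := by
    unfold gsum
    rw [Finset.sum_mul_sum]
    rw [Finset.sum_comm (f := fun w v => chi2 (Q w) * chi2 (B v w))]
    refine Finset.sum_congr rfl fun v _ => ?_
    refine (Fintype.sum_equiv (Equiv.addLeft v) _ _ (fun w => ?_)).symm
    simp only [Equiv.coe_addLeft, YF_add h, chi2_add]
    generalize Q v = a
    generalize Q w = b
    generalize B v w = c
    revert a b c; decide
  rw [this, Finset.sum_eq_single 0]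
  · simp [YF_zero h, chi2]
  · intro w _ hw; rw [← Finset.mul_sum, key w hw, mul_zero]
  · simp

lemma split_lem {V : Type*} [AddCommGroup V] [Module (ZMod 2) V]
    {B : V →ₗ[ZMod 2] V →ₗ[ZMod 2] ZMod 2} (hB : IsSymplectic B) {Q : V → ZMod 2}
    (h : YieldsForm B Q) (a : V) (ha : a ≠ 0) (hQa : Q a = 0) :
    ∃ (W : Submodule (ZMod 2) V) (e : (ZMod 2 × ZMod 2 × W) ≃ₗ[ZMod 2] V)
      (B' : W →ₗ[ZMod 2] W →ₗ[ZMod 2] ZMod 2), IsSymplectic B' ∧ YieldsForm B' (fun w => Q w) ∧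
      e (1, 0, 0) = a ∧ ∀ s t w, Q (e (s, t, w)) = s * t + Q w := by
  obtain ⟨c, hac, hQc⟩ : ∃ c, B a c = 1 ∧ Q c = 0 := by
    obtain ⟨u, hu⟩ := hB.2 a ha
    have hu1 : B a u = 1 := (zmod2_cases _).resolve_left hu
    rcases zmod2_cases (Q u) with h0 | h1
    · exact ⟨u, hu1, h0⟩
    · refine ⟨u + a, by simp [hu1, hB.1], ?_⟩
      rw [YF_add h, h1, hQa, B_symm hB, hu1]; rfl
  have hca : B c a = 1 := by rw [B_symm hB, hac]
  let W : Submodule (ZMod 2) V := LinearMap.ker (B a) ⊓ LinearMap.ker (B c)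
  have hWa : ∀ w : W, B a w = 0 := fun w => w.2.1
  have hWc : ∀ w : W, B c w = 0 := fun w => w.2.2
  have hWa' : ∀ w : W, B w a = 0 := fun w => by rw [B_symm hB, hWa]
  have hWc' : ∀ w : W, B w c = 0 := fun w => by rw [B_symm hB, hWc]
  let f : (ZMod 2 × ZMod 2 × W) →ₗ[ZMod 2] V :=
    { toFun := fun p => p.1 • a + p.2.1 • c + p.2.2
      map_add' := by
        rintro ⟨s, t, w⟩ ⟨s', t', w'⟩
        simp only [Prod.mk_add_mk, add_smul, Submodule.coe_add]; abel
      map_smul' := by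
        rintro r ⟨s, t, w⟩
        simp [smul_add, mul_smul] }
  have hf : ∀ s t w, f (s, t, w) = s • a + t • c + w := fun _ _ _ => rfl
  have hinj : Function.Injective f := by
    rw [← LinearMap.ker_eq_bot, LinearMap.ker_eq_bot']
    rintro ⟨s, t, w⟩ hp
    rw [hf] at hp
    have h1 := congrArg (B a) hp
    have h2 := congrArg (B c) hp
    simp [hB.1, hac, hca, hWa, hWc] at h1 h2
    subst h1 h2
    simpa using hp
  have hsurj : Function.Surjective f := by
    intro v
    refine ⟨(B c v, B a v, ⟨v - B c v • a - B a v • c, ?_⟩), ?_⟩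
    · constructor <;> simp [hB.1, hac, hca]
    · rw [hf]; simp
  let e := LinearEquiv.ofBijective f ⟨hinj, hsurj⟩
  have he : ∀ s t w, e (s, t, w) = s • a + t • c + w := fun _ _ _ => rfl
  refine ⟨W, e, B.domRestrict₁₂ W W, ⟨fun v => ?_, ?_⟩, ?_, ?_, ?_⟩
  · exact hB.1 v
  · intro w hw
    obtain ⟨u, hu⟩ := hB.2 w (by simpa using hw)
    obtain ⟨⟨s, t, w'⟩, rfl⟩ := hsurj u
    refine ⟨w', ?_⟩
    change B w w' ≠ 0
    rw [hf] at hu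
    simpa [hWa', hWc'] using hu
  · intro v w
    exact h v w
  · rw [he]; simp
  · intro s t w
    rw [he]
    rcases zmod2_cases s with rfl | rfl <;> rcases zmod2_cases t with rfl | rfl <;>
      simp [YF_add h, hQa, hQc, hac, hWa, hWc, YF_zero h]
    all_goals ring

lemma gsum_split {V W : Type*} [AddCommGroup V] [Module (ZMod 2) V] [AddCommGroup W]
    [Module (ZMod 2) W] [Fintype V] [Fintype W] {Q : V → ZMod 2} {Q' : W → ZMod 2}
    (e : (ZMod 2 × ZMod 2 × W) ≃ₗ[ZMod 2] V) (he : ∀ s t w, Q (e (s, t, w)) = s * t + Q' w) :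
    gsum Q = 2 * gsum Q' := by
  unfold gsum
  rw [← Fintype.sum_equiv e.toEquiv (fun p => chi2 (Q (e p))) _ (fun p => rfl)]
  simp only [Fintype.sum_prod_type, he, chi2_add, ← Finset.mul_sum, ← Finset.sum_mul]
  congr 1

lemma step_lem {V V' : Type*} [AddCommGroup V] [Module (ZMod 2) V] [AddCommGroup V']
    [Module (ZMod 2) V'] [Fintype V] [Fintype V']
    {B : V →ₗ[ZMod 2] V →ₗ[ZMod 2] ZMod 2} (hB : IsSymplectic B) {Q : V → ZMod 2}
    (h : YieldsForm B Q) (a : V) (ha : a ≠ 0) (hQa : Q a = 0)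
    {B' : V' →ₗ[ZMod 2] V' →ₗ[ZMod 2] ZMod 2} (hB' : IsSymplectic B') {Q' : V' → ZMod 2}
    (h' : YieldsForm B' Q') (a' : V') (ha' : a' ≠ 0) (hQa' : Q' a' = 0)
    (hcard : Fintype.card V = Fintype.card V') (hg : gsum Q = gsum Q')
    (ih : ∀ (W : Submodule (ZMod 2) V) (W' : Submodule (ZMod 2) V') [Fintype W] [Fintype W']
      (C : W →ₗ[ZMod 2] W →ₗ[ZMod 2] ZMod 2) (C' : W' →ₗ[ZMod 2] W' →ₗ[ZMod 2] ZMod 2)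
      (R : W → ZMod 2) (R' : W' → ZMod 2),
      IsSymplectic C → IsSymplectic C' → YieldsForm C R → YieldsForm C' R' →
      Fintype.card W < Fintype.card V → Fintype.card W = Fintype.card W' → gsum R = gsum R' →
      ∃ f : W ≃ₗ[ZMod 2] W', ∀ w, R' (f w) = R w) :
    ∃ f : V ≃ₗ[ZMod 2] V', (∀ v, Q' (f v) = Q v) ∧ f a = a' := by
  classical
  obtain ⟨W, e, C, hC, hR, hea, he⟩ := split_lem hB h a ha hQa
  obtain ⟨W', e', C', hC', hR', hea', he'⟩ := split_lem hB' h' a' ha' hQa'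
  letI : Fintype W := Fintype.ofFinite W
  letI : Fintype W' := Fintype.ofFinite W'
  have g1 := gsum_split (Q' := fun w : W => Q w) e he
  have g2 := gsum_split (Q' := fun w : W' => Q' w) e' he'
  have c1 := Fintype.card_congr e.toEquiv
  have c2 := Fintype.card_congr e'.toEquiv
  simp only [Fintype.card_prod, ZMod.card] at c1 c2
  have hpos : 0 < Fintype.card W := Fintype.card_pos
  obtain ⟨f, hf⟩ := ih W W' C C' _ _ hC hC' hR hR' (by omega) (by omega) (by omega)
  let F : (ZMod 2 × ZMod 2 × W) ≃ₗ[ZMod 2] (ZMod 2 × ZMod 2 × W') :=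
    (LinearEquiv.refl _ _).prodCongr ((LinearEquiv.refl _ _).prodCongr f)
  have hF : ∀ s t w, F (s, t, w) = (s, t, f w) := fun _ _ _ => rfl
  refine ⟨e.symm.trans (F.trans e'), ?_, ?_⟩
  · intro v
    obtain ⟨⟨s, t, w⟩, rfl⟩ := e.surjective v
    simp only [LinearEquiv.trans_apply, LinearEquiv.symm_apply_apply, hF, he, he']
    rw [hf]
  · rw [← hea]
    simp only [LinearEquiv.trans_apply, LinearEquiv.symm_apply_apply, hF, map_zero, hea']

lemma iso_lem (n : ℕ) : ∀ {V V' : Type u} [AddCommGroup V] [Module (ZMod 2) V] [AddCommGroup V']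
    [Module (ZMod 2) V'] [Fintype V] [Fintype V']
    (B : V →ₗ[ZMod 2] V →ₗ[ZMod 2] ZMod 2) (B' : V' →ₗ[ZMod 2] V' →ₗ[ZMod 2] ZMod 2)
    (Q : V → ZMod 2) (Q' : V' → ZMod 2),
    IsSymplectic B → IsSymplectic B' → YieldsForm B Q → YieldsForm B' Q' →
    Fintype.card V = n → Fintype.card V = Fintype.card V' → gsum Q = gsum Q' →
    ∃ f : V ≃ₗ[ZMod 2] V', ∀ v, Q' (f v) = Q v := by
  induction n using Nat.strong_induction_on with
  | _ n ih =>
  intro V V' _ _ _ _ _ _ B B' Q Q' hB hB' h h' hn hcard hg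
  have hnc : (quadric Q).ncard = (quadric Q').ncard := by
    rw [gsum_eq_ncard, gsum_eq_ncard] at hg; omega
  have hz : ∀ {U : Type u} [AddCommGroup U] [Fintype U] (R : U → ZMod 2), R 0 = 0 →
      ((∃ a, a ≠ 0 ∧ R a = 0) ↔ 1 < (quadric R).ncard) := by
    intro U _ _ R h0
    rw [Set.one_lt_ncard_iff_nontrivial]
    constructor
    · rintro ⟨a, ha, hR⟩
      exact ⟨a, hR, 0, h0, ha⟩
    · intro hnt
      obtain ⟨a, h1, h2⟩ := hnt.exists_ne 0
      exact ⟨a, h2, h1⟩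
  by_cases hs : ∃ a, a ≠ 0 ∧ Q a = 0
  · have hs' : ∃ a, a ≠ 0 ∧ Q' a = 0 := by
      rw [hz _ (YF_zero h')]; rw [hz _ (YF_zero h)] at hs; omega
    obtain ⟨a, ha, hQa⟩ := hs
    obtain ⟨a', ha', hQa'⟩ := hs'
    obtain ⟨f, hf, -⟩ := step_lem hB h a ha hQa hB' h' a' ha' hQa' hcard hg (by
      intro W W' _ _ C C' R R' hC hC' hR hR' hlt hc hgg
      exact ih _ (hn ▸ hlt) C C' R R' hC hC' hR hR' rfl hc hgg)
    exact ⟨f, hf⟩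
  · have hs' : ¬ ∃ a, a ≠ 0 ∧ Q' a = 0 := by
      rw [hz _ (YF_zero h')]; rw [hz _ (YF_zero h)] at hs; omega
    have hfr : Module.finrank (ZMod 2) V = Module.finrank (ZMod 2) V' := by
      have e1 := Module.card_eq_pow_finrank (K := ZMod 2) (V := V)
      have e2 := Module.card_eq_pow_finrank (K := ZMod 2) (V := V')
      rw [e1, e2] at hcard
      exact Nat.pow_right_injective (by simp) hcard
    refine ⟨LinearEquiv.ofFinrankEq V V' hfr, fun v => ?_⟩
    push Not at hs hs'
    by_cases hv : v = 0
    · subst hv; rw [map_zero, YF_zero h, YF_zero h']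
    · rw [(zmod2_cases _).resolve_left (hs v hv), (zmod2_cases _).resolve_left (hs' _ (by simpa using hv))]

lemma diff_lem {V : Type*} [AddCommGroup V] [Module (ZMod 2) V] [Fintype V]
    {B : V →ₗ[ZMod 2] V →ₗ[ZMod 2] ZMod 2} (hB : IsSymplectic B) {Q Q' : V → ZMod 2}
    (h : YieldsForm B Q) (h' : YieldsForm B Q') (hne : Q ≠ Q')
    (hc : (quadric Q').ncard = (quadric Q).ncard) :
    ∃ a, a ≠ 0 ∧ Q a = 0 ∧ ∀ v, Q' v = Q v + B a v := by
  classical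
  let l : V →+ ZMod 2 := AddMonoidHom.mk' (fun v => Q v + Q' v) (by
    intro v w
    rw [YF_add h, YF_add h']
    generalize Q v = a
    generalize Q w = b
    generalize Q' v = c
    generalize Q' w = d
    generalize B v w = x
    revert a b c d x; decide)
  let L : Module.Dual (ZMod 2) V := l.toZModLinearMap 2
  have hinj : Function.Injective B := by
    rw [← LinearMap.ker_eq_bot, LinearMap.ker_eq_bot']
    intro m hm
    by_contra hm0
    obtain ⟨w, hw⟩ := hB.2 m hm0
    exact hw (by rw [hm]; rfl)
  have hsurj : Function.Surjective B :=
    (LinearMap.injective_iff_surjective_of_finrank_eq_finrank (f := B)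
      (Subspace.dual_finrank_eq (K := ZMod 2) (V := V)).symm).1 hinj
  obtain ⟨a, ha⟩ := hsurj L
  have hQ' : ∀ v, Q' v = Q v + B a v := by
    intro v
    rw [ha]
    change Q' v = Q v + (Q v + Q' v)
    generalize Q v = a
    generalize Q' v = c
    revert a c; decide
  have hg : gsum Q' = gsum Q := by rw [gsum_eq_ncard, gsum_eq_ncard, hc]
  have hg2 : gsum Q' = chi2 (Q a) * gsum Q := by
    unfold gsum
    rw [Finset.mul_sum]
    refine Fintype.sum_equiv (Equiv.addLeft a) _ _ (fun v => ?_)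
    simp only [Equiv.coe_addLeft, YF_add h, hQ']
    generalize Q v = x
    generalize Q a = y
    generalize B a v = z
    revert x y z; decide
  have hsq := gsum_sq hB h
  have hpos : (0 : ℤ) < Fintype.card V := by exact_mod_cast Fintype.card_pos
  refine ⟨a, ?_, ?_, hQ'⟩
  · rintro rfl
    exact hne (funext fun v => by simp [hQ'])
  · refine (zmod2_cases _).resolve_right fun h1 => ?_
    rw [h1, show chi2 1 = -1 by decide] at hg2
    have : gsum Q = 0 := by linarith
    rw [this] at hsq
    linarith

/-- The action `(A·Q)(v) = Q(A⁻¹v)` of the symplectic group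
`Sp(B)` on the set of quadratic forms yielding `B` of either given sign is
doubly transitive: any ordered pair of distinct forms whose quadrics have the
same cardinality can be mapped to any other such pair. -/
theorem Sp_doubly_transitive_on_quadratic_forms
    {J : ℕ} (hJ : 0 < J)
    {V : Type*} [AddCommGroup V] [Module (ZMod 2) V] [Fintype V] [DecidableEq V]
    (hdim : Module.finrank (ZMod 2) V = 2 * J)
    (B : V →ₗ[ZMod 2] V →ₗ[ZMod 2] ZMod 2) (hB : IsSymplectic B)
    (Q₁ Q₂ Q₃ Q₄ : V → ZMod 2)
    (h₁ : YieldsForm B Q₁) (h₂ : YieldsForm B Q₂)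
    (h₃ : YieldsForm B Q₃) (h₄ : YieldsForm B Q₄)
    (hc₂ : (quadric Q₂).ncard = (quadric Q₁).ncard)
    (hc₃ : (quadric Q₃).ncard = (quadric Q₁).ncard)
    (hc₄ : (quadric Q₄).ncard = (quadric Q₁).ncard)
    (h12 : Q₁ ≠ Q₂) (h34 : Q₃ ≠ Q₄) :
    ∃ A : V ≃ₗ[ZMod 2] V,
      (∀ x y : V, B (A x) (A y) = B x y) ∧
      (∀ v : V, Q₃ v = Q₁ (A.symm v)) ∧
      (∀ v : V, Q₄ v = Q₂ (A.symm v)) := by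
  obtain ⟨a, ha, hQa, hQ2⟩ := diff_lem hB h₁ h₂ h12 hc₂
  obtain ⟨b, hb, hQb, hQ4⟩ := diff_lem hB h₃ h₄ h34 (hc₄.trans hc₃.symm)
  have hg : gsum Q₁ = gsum Q₃ := by rw [gsum_eq_ncard, gsum_eq_ncard, hc₃]
  obtain ⟨A, hA, hAa⟩ := step_lem hB h₁ a ha hQa hB h₃ b hb hQb rfl hg (by
    intro W W' _ _ C C' R R' hC hC' hR hR' hlt hc hgg
    exact iso_lem _ C C' R R' hC hC' hR hR' rfl hc hgg)
  have hAB : ∀ x y : V, B (A x) (A y) = B x y := by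
    intro x y
    rw [← h₃, ← h₁, ← map_add, hA, hA, hA]
  refine ⟨A, hAB, fun v => ?_, fun v => ?_⟩
  · rw [← hA, A.apply_symm_apply]
  · rw [hQ4, hQ2, ← hA, ← hAB a, hAa, A.apply_symm_apply]
end
end

section
/- Let B be a symplectic form on a 2J-dimensional vector space V over F_2 with J ≥ 2, and let D ⊆ V be an affine quadric with #D = 2^{J−1}(2^J+1). Then every Lagrangian subspace of V has exactly one coset contained in D; hence the number of affine Lagrangian subspaces of V contained in D equals the number ∏_{j=1}^{J}(2^j+1) of Lagrangian subspaces of V. Moreover, every pair of distinct points of D is contained in exactly ∏_{j=0}^{J−2}(2^j+1) affine Lagrangian subspaces contained in D; i.e., the affine Lagrangian subspaces contained in D form a BIBD on the point set D with parameters V_D = 2^{J−1}(2^J+1), K_D = 2^J, Λ_D = ∏_{j=0}^{J−2}(2^j+1). -/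
open scoped BigOperators

noncomputable section

/-- The orthogonal complement of a subset with respect to a bilinear form. -/
def sympPerp {F V : Type*} [CommRing F] [AddCommGroup V] [Module F V]
    (B : V →ₗ[F] V →ₗ[F] F) (S : Set V) : Set V :=
  {w | ∀ v ∈ S, B v w = 0}

/-- A subspace is Lagrangian if it equals its own orthogonal complement. -/
def IsLagrangian {F V : Type*} [CommRing F] [AddCommGroup V] [Module F V]
    (B : V →ₗ[F] V →ₗ[F] F) (L : Submodule F V) : Prop :=
  (L : Set V) = sympPerp B (L : Set V)

/-- The affine Lagrangian subspaces: cosets `v + L` of Lagrangian subspaces. -/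
def affineLagrangians {F V : Type*} [CommRing F] [AddCommGroup V] [Module F V]
    (B : V →ₗ[F] V →ₗ[F] F) : Set (Set V) :=
  {A | ∃ (v : V) (L : Submodule F V), IsLagrangian B L ∧
        A = (fun x => v + x) '' (L : Set V)}

/-- A subset is an affine quadric if it or its complement is the quadric of
some quadratic form yielding `B`. -/
def IsAffineQuadric {V : Type*} [AddCommGroup V] [Module (ZMod 2) V]
    (B : V →ₗ[ZMod 2] V →ₗ[ZMod 2] ZMod 2) (D : Set V) : Prop :=
  ∃ Q : V → ZMod 2, YieldsForm B Q ∧ (D = quadric Q ∨ D = (quadric Q)ᶜ)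

section helpers

variable {V : Type*} [AddCommGroup V] [Module (ZMod 2) V]

def chi (a : ZMod 2) : ℤ := if a = 0 then 1 else -1

theorem chi_add : ∀ a b : ZMod 2, chi (a + b) = chi a * chi b := by decide

theorem z2_add_self (a : ZMod 2) : a + a = 0 := by revert a; decide

theorem z2_cases : ∀ a : ZMod 2, a = 0 ∨ a = 1 := by decide

theorem z2_eq_of_add {a b : ZMod 2} (h : a + b = 0) : a = b := by revert a b; decide

theorem symp_nondeg {B : V →ₗ[ZMod 2] V →ₗ[ZMod 2] ZMod 2} (hB : IsSymplectic B) :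
    LinearMap.BilinForm.Nondegenerate B := by
  have hsymm : ∀ v w, B v w = B w v := by
    intro v w
    have h := hB.1 (v + w)
    simp only [map_add, LinearMap.add_apply, hB.1, zero_add, add_zero] at h
    exact (z2_eq_of_add h).symm
  constructor
  · intro v hv
    by_contra hne
    obtain ⟨w, hw⟩ := hB.2 v hne
    exact hw (hv w)
  · intro v hv
    by_contra hne
    obtain ⟨w, hw⟩ := hB.2 v hne
    exact hw (by rw [hsymm]; exact hv w)

theorem symp_symm {B : V →ₗ[ZMod 2] V →ₗ[ZMod 2] ZMod 2} (hB : IsSymplectic B) (v w : V) :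
    B v w = B w v := by
  have h := hB.1 (v + w)
  simp only [map_add, LinearMap.add_apply, hB.1, zero_add, add_zero] at h
  exact (z2_eq_of_add h).symm

/-- perp as a submodule -/
def perpS (B : V →ₗ[ZMod 2] V →ₗ[ZMod 2] ZMod 2) (W : Submodule (ZMod 2) V) :
    Submodule (ZMod 2) V := LinearMap.BilinForm.orthogonal B W

theorem mem_perpS {B : V →ₗ[ZMod 2] V →ₗ[ZMod 2] ZMod 2} {W : Submodule (ZMod 2) V} {v : V} :
    v ∈ perpS B W ↔ ∀ w ∈ W, B w v = 0 := LinearMap.BilinForm.mem_orthogonal_iff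

theorem lag_iff {B : V →ₗ[ZMod 2] V →ₗ[ZMod 2] ZMod 2} {L : Submodule (ZMod 2) V} :
    IsLagrangian B L ↔ L = perpS B L := by
  unfold IsLagrangian sympPerp
  constructor
  · intro h
    ext x
    rw [mem_perpS]
    exact Set.ext_iff.1 h x
  · intro h
    ext x
    exact (SetLike.ext_iff.1 h x).trans mem_perpS

theorem q_add {B : V →ₗ[ZMod 2] V →ₗ[ZMod 2] ZMod 2} {Q : V → ZMod 2} (hQ : YieldsForm B Q)
    (v w : V) : Q (v + w) = Q v + Q w + B v w := by
  have := hQ v w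
  rw [← this]
  generalize Q (v + w) = a, Q v = b, Q w = c
  revert a b c; decide

theorem q_shift {B : V →ₗ[ZMod 2] V →ₗ[ZMod 2] ZMod 2} {Q : V → ZMod 2} (hQ : YieldsForm B Q)
    (a : V) : YieldsForm B (fun v => Q v + B a v) := by
  intro v w
  simp only [map_add]
  rw [← hQ v w]
  generalize Q (v + w) = x, Q v = y, Q w = z, B a v = s, B a w = t
  revert x y z s t; decide

theorem q_zero {B : V →ₗ[ZMod 2] V →ₗ[ZMod 2] ZMod 2} {Q : V → ZMod 2} (hQ : YieldsForm B Q) :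
    Q 0 = 0 := by
  have := hQ 0 0
  simp only [add_zero, map_zero] at this
  generalize Q 0 = x at *
  revert x; decide

variable [Fintype V]

theorem card_sub (W : Submodule (ZMod 2) V) :
    Nat.card W = 2 ^ Module.finrank (ZMod 2) W := by
  classical
  rw [Nat.card_eq_fintype_card, Module.card_eq_pow_finrank (K := ZMod 2), ZMod.card]

theorem finrank_perp {B : V →ₗ[ZMod 2] V →ₗ[ZMod 2] ZMod 2} (hB : IsSymplectic B)
    (W : Submodule (ZMod 2) V) :
    Module.finrank (ZMod 2) (perpS B W) =
      Module.finrank (ZMod 2) V - Module.finrank (ZMod 2) W :=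
  LinearMap.BilinForm.finrank_orthogonal (symp_nondeg hB) W

theorem lag_finrank {J : ℕ} (hdim : Module.finrank (ZMod 2) V = 2 * J)
    {B : V →ₗ[ZMod 2] V →ₗ[ZMod 2] ZMod 2} (hB : IsSymplectic B)
    {L : Submodule (ZMod 2) V} (hL : IsLagrangian B L) : Module.finrank (ZMod 2) L = J := by
  have h := finrank_perp hB L
  rw [← lag_iff.1 hL, hdim] at h
  have := Submodule.finrank_le L
  omega

open Classical in
theorem char_inner {B : V →ₗ[ZMod 2] V →ₗ[ZMod 2] ZMod 2} (hB : IsSymplectic B)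
    (W : Submodule (ZMod 2) V) (v : V) :
    ∑ w : W, chi (B v w) = if v ∈ perpS B W then (Nat.card W : ℤ) else 0 := by
  split_ifs with h
  · rw [mem_perpS] at h
    have : ∀ w : W, chi (B v w) = 1 := fun w => by
      rw [symp_symm hB, h w w.2]; rfl
    simp [this]
  · rw [mem_perpS] at h
    push Not at h
    obtain ⟨w₀, hw₀, hne⟩ := h
    have h1 : B v w₀ = 1 := by
      rw [symp_symm hB]
      generalize B w₀ v = x at *
      revert x; decide
    have := Equiv.sum_comp (Equiv.addRight (⟨w₀, hw₀⟩ : W)) (fun w : W => chi (B v w))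
    simp only [Equiv.coe_addRight, Submodule.coe_add, map_add, chi_add, h1] at this
    rw [← Finset.sum_mul] at this
    have h2 : chi 1 = -1 := by decide
    rw [h2] at this
    linarith

open Classical in
theorem char_sum {B : V →ₗ[ZMod 2] V →ₗ[ZMod 2] ZMod 2} (hB : IsSymplectic B)
    {Q : V → ZMod 2} (hQ : YieldsForm B Q)
    (W : Submodule (ZMod 2) V) (hW : ∀ w ∈ W, Q w = 0) :
    ∑ v, chi (Q v) = ∑ v with v ∈ perpS B W, chi (Q v) := by
  have hpos : (Nat.card W : ℤ) ≠ 0 := by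
    exact_mod_cast Nat.card_pos.ne'
  apply mul_left_cancel₀ hpos
  have h1 : (Nat.card W : ℤ) * ∑ v, chi (Q v) = ∑ w : W, ∑ v, chi (Q (v + w)) := by
    have : ∀ w : W, ∑ v, chi (Q (v + w)) = ∑ v, chi (Q v) := fun w =>
      Equiv.sum_comp (Equiv.addRight (w : V)) (fun v => chi (Q v))
    simp [this]
  rw [h1, Finset.sum_comm, Finset.sum_filter, Finset.mul_sum]
  refine Finset.sum_congr rfl fun v _ => ?_
  have : ∀ w : W, chi (Q (v + w)) = chi (Q v) * chi (B v w) := fun w => by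
    rw [q_add hQ, hW w w.2, add_zero, chi_add]
  simp only [this]
  rw [← Finset.mul_sum, char_inner hB]
  split_ifs <;> ring

open Classical in
theorem zero_count (Q : V → ZMod 2) (s : Finset V) :
    2 * ((s.filter (fun v => Q v = 0)).card : ℤ) = s.card + ∑ v ∈ s, chi (Q v) := by
  rw [Finset.card_filter, Finset.card_eq_sum_ones]
  push_cast
  rw [← Finset.sum_add_distrib, Finset.mul_sum]
  refine Finset.sum_congr rfl fun v _ => ?_
  unfold chi
  split_ifs <;> simp

open Classical in
theorem card_filter_mem (W : Submodule (ZMod 2) V) :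
    (Finset.univ.filter (fun v => v ∈ W)).card = 2 ^ Module.finrank (ZMod 2) W := by
  rw [← card_sub, Nat.card_eq_fintype_card]
  exact (Fintype.card_subtype _).symm

theorem mem_sup_span {W : Submodule (ZMod 2) V} {u x : V}
    (hx : x ∈ W ⊔ Submodule.span (ZMod 2) {u}) : ∃ w ∈ W, x = w ∨ x = w + u := by
  obtain ⟨w, hw, z, hz, rfl⟩ := Submodule.mem_sup.1 hx
  obtain ⟨a, rfl⟩ := Submodule.mem_span_singleton.1 hz
  refine ⟨w, hw, ?_⟩
  have : a = 0 ∨ a = 1 := z2_cases a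
  rcases this with rfl | rfl <;> simp

open Classical in
theorem count_lag {J : ℕ} (hdim : Module.finrank (ZMod 2) V = 2 * J)
    {B : V →ₗ[ZMod 2] V →ₗ[ZMod 2] ZMod 2} (hB : IsSymplectic B)
    (S : Set V) (g : ℕ → ℕ)
    (hcl : ∀ w ∈ S, ∀ u ∈ S, B w u = 0 → w + u ∈ S)
    (hc : ∀ (W : Submodule (ZMod 2) V) (m : ℕ), W ≤ perpS B W → (W : Set V) ⊆ S →
      Module.finrank (ZMod 2) W + m + 1 = J →
      ((Finset.univ.filter (fun v => v ∈ perpS B W ∧ v ∈ S)).card : ℤ) =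
        2 ^ Module.finrank (ZMod 2) W + (2 ^ J - 2 ^ Module.finrank (ZMod 2) W) * g m)
    (m : ℕ) : ∀ (W : Submodule (ZMod 2) V), W ≤ perpS B W → (W : Set V) ⊆ S →
      Module.finrank (ZMod 2) W + m = J →
      {L : Submodule (ZMod 2) V | IsLagrangian B L ∧ W ≤ L ∧ (L : Set V) ⊆ S}.ncard =
        ∏ i ∈ Finset.range m, g i := by
  induction m with
  | zero =>
    intro W hW hS hr
    rw [Finset.prod_range_zero, Set.ncard_eq_one]
    refine ⟨W, ?_⟩
    ext L
    simp only [Set.mem_ofPred_eq, Set.mem_singleton_iff]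
    constructor
    · rintro ⟨h1, h2, h3⟩
      refine (Submodule.eq_of_le_of_finrank_eq h2 ?_).symm
      rw [lag_finrank hdim hB h1]; omega
    · rintro rfl
      refine ⟨lag_iff.2 (Submodule.eq_of_le_of_finrank_eq hW ?_), le_rfl, hS⟩
      rw [finrank_perp hB]; omega
  | succ m ih =>
    intro W hW hS hr
    set k := Module.finrank (ZMod 2) W with hk
    have : Fintype (Submodule (ZMod 2) V) := Fintype.ofFinite _
    have hfin : ∀ W' : Submodule (ZMod 2) V,
        {L : Submodule (ZMod 2) V | IsLagrangian B L ∧ W' ≤ L ∧ (L : Set V) ⊆ S}.ncard =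
        (Finset.univ.filter (fun L : Submodule (ZMod 2) V =>
          IsLagrangian B L ∧ W' ≤ L ∧ (L : Set V) ⊆ S)).card := by
      intro W'
      rw [← Set.ncard_coe_finset]; simp
    rw [hfin]
    set s := Finset.univ.filter (fun L : Submodule (ZMod 2) V =>
          IsLagrangian B L ∧ W ≤ L ∧ (L : Set V) ⊆ S) with hs
    set t := Finset.univ.filter (fun v => (v ∈ perpS B W ∧ v ∈ S) ∧ v ∉ W) with ht
    have dc := Finset.sum_card_bipartiteAbove_eq_sum_card_bipartiteBelow
      (fun (L : Submodule (ZMod 2) V) (u : V) => u ∈ L) (s := s) (t := t)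
    have hlt : (2:ℤ) ^ k < 2 ^ J := pow_lt_pow_right₀ (by norm_num) (by omega)
    have h1 : ∀ L ∈ s, ((Finset.bipartiteAbove
        (fun (L : Submodule (ZMod 2) V) (u : V) => u ∈ L) t L).card : ℤ) = 2 ^ J - 2 ^ k := by
      intro L hL
      simp only [hs, Finset.mem_filter, Finset.mem_univ, true_and] at hL
      obtain ⟨hL, hWL, hLS⟩ := hL
      have e : Finset.bipartiteAbove (fun (L : Submodule (ZMod 2) V) (u : V) => u ∈ L) t L
          = Finset.univ.filter (fun v => v ∈ L) \ Finset.univ.filter (fun v => v ∈ W) := by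
        ext v
        simp only [Finset.bipartiteAbove, ht, Finset.mem_filter, Finset.mem_univ, true_and,
          Finset.mem_sdiff]
        constructor
        · rintro ⟨⟨_, h⟩, h'⟩; exact ⟨h', h⟩
        · rintro ⟨h, h'⟩
          refine ⟨⟨⟨?_, hLS h⟩, h'⟩, h⟩
          have h2 := h
          rw [lag_iff.1 hL] at h2
          rw [mem_perpS] at h2 ⊢
          exact fun w hw => h2 w (hWL hw)
      rw [e, Finset.cast_card_sdiff, card_filter_mem, card_filter_mem, lag_finrank hdim hB hL]
      · push_cast; rfl
      · intro v; simp only [Finset.mem_filter, Finset.mem_univ, true_and]; exact fun h => hWL h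
    have h2 : ∀ u ∈ t, (Finset.bipartiteBelow
        (fun (L : Submodule (ZMod 2) V) (u : V) => u ∈ L) s u).card =
          ∏ i ∈ Finset.range m, g i := by
      intro u hu
      simp only [ht, Finset.mem_filter, Finset.mem_univ, true_and] at hu
      obtain ⟨⟨hu1, hu2⟩, hu3⟩ := hu
      have hu0 : u ≠ 0 := by rintro rfl; exact hu3 (zero_mem _)
      rw [mem_perpS] at hu1
      rw [← ih (W ⊔ Submodule.span (ZMod 2) {u}), hfin]
      · congr 1
        ext L
        simp only [Finset.bipartiteBelow, hs, Finset.mem_filter, Finset.mem_univ, true_and,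
          sup_le_iff, Submodule.span_singleton_le_iff_mem]
        tauto
      · intro x hx
        rw [mem_perpS]
        intro y hy
        obtain ⟨w, hw, hx⟩ := mem_sup_span hx
        obtain ⟨w', hw', hy⟩ := mem_sup_span hy
        have a1 : B w' w = 0 := mem_perpS.1 (hW hw) _ hw'
        have a2 := hu1 w hw
        have a3 := hu1 w' hw'
        have a4 : B u w = 0 := by rw [symp_symm hB]; exact a2
        have a5 := hB.1 u
        rcases hx with rfl | rfl <;> rcases hy with rfl | rfl <;>
          simp [a1, a2, a3, a4, a5]
      · intro x hx
        obtain ⟨w, hw, hx⟩ := mem_sup_span hx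
        rcases hx with rfl | rfl
        · exact hS hw
        · exact hcl _ (hS hw) _ hu2 (hu1 w hw)
      · have hd : W ⊓ Submodule.span (ZMod 2) {u} = ⊥ := by
          rw [eq_bot_iff]
          intro x hx
          obtain ⟨hx1, hx2⟩ := Submodule.mem_inf.1 hx
          obtain ⟨a, rfl⟩ := Submodule.mem_span_singleton.1 hx2
          have : a = 0 ∨ a = 1 := z2_cases a
          rcases this with rfl | rfl
          · simp
          · rw [one_smul] at hx1; exact absurd hx1 hu3
        have := Submodule.finrank_sup_add_finrank_inf_eq W (Submodule.span (ZMod 2) {u})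
        rw [hd, finrank_bot, finrank_span_singleton hu0] at this
        omega
    have h3 : (t.card : ℤ) = (2 ^ J - 2 ^ k) * g m := by
      have e : t = Finset.univ.filter (fun v => v ∈ perpS B W ∧ v ∈ S) \
          Finset.univ.filter (fun v => v ∈ W) := by
        ext v; simp [ht]
      rw [e, Finset.cast_card_sdiff, card_filter_mem, hc W m hW hS (by omega)]
      · push_cast; ring
      · intro v; simp only [Finset.mem_filter, Finset.mem_univ, true_and]
        exact fun h => ⟨hW h, hS h⟩
    rw [Finset.sum_congr rfl h2, Finset.sum_const, smul_eq_mul] at dc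
    have dc' := congrArg (Nat.cast : ℕ → ℤ) dc
    rw [Nat.cast_sum, Finset.sum_congr rfl h1, Finset.sum_const, nsmul_eq_mul, Nat.cast_mul, h3]
      at dc'
    rw [Finset.prod_range_succ]
    have hne : (2:ℤ) ^ J - 2 ^ k ≠ 0 := by linarith
    have : (s.card : ℤ) = ((∏ i ∈ Finset.range m, g i) * g m : ℕ) := by
      apply mul_right_cancel₀ hne
      rw [dc']; push_cast; ring
    exact_mod_cast this

theorem count_all {J : ℕ} (hdim : Module.finrank (ZMod 2) V = 2 * J)
    {B : V →ₗ[ZMod 2] V →ₗ[ZMod 2] ZMod 2} (hB : IsSymplectic B) :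
    {L : Submodule (ZMod 2) V | IsLagrangian B L}.ncard =
      ∏ j ∈ Finset.Icc 1 J, (2 ^ j + 1) := by
  classical
  have h := count_lag hdim hB Set.univ (fun i => 2 ^ (i + 1) + 1) (by simp)
    (by
      intro W m hW _ hr
      simp only [Set.mem_univ, and_true]
      rw [card_filter_mem, finrank_perp hB, hdim]
      generalize Module.finrank (ZMod 2) W = k at *
      subst hr
      have : 2 * (k + m + 1) - k = k + m + 1 + (m + 1) := by omega
      rw [this]; push_cast; ring)
    J ⊥ bot_le (Set.subset_univ _) (by simp)
  simp only [bot_le, Set.subset_univ, and_true] at h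
  rw [h, ← Finset.Ico_add_one_right_eq_Icc, Finset.prod_Ico_eq_prod_range]
  simp [add_comm]

theorem count_sing {J : ℕ} (hdim : Module.finrank (ZMod 2) V = 2 * J)
    {B : V →ₗ[ZMod 2] V →ₗ[ZMod 2] ZMod 2} (hB : IsSymplectic B)
    {Q : V → ZMod 2} (hQ : YieldsForm B Q) (hs : ∑ v, chi (Q v) = 2 ^ J)
    (hJ : 1 ≤ J) (u : V) (hu : u ≠ 0) (hQu : Q u = 0) :
    {L : Submodule (ZMod 2) V | IsLagrangian B L ∧ u ∈ L ∧ ∀ x ∈ L, Q x = 0}.ncard =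
      ∏ j ∈ Finset.range (J - 1), (2 ^ j + 1) := by
  classical
  have hsp : ∀ x ∈ Submodule.span (ZMod 2) {u}, x = 0 ∨ x = u := by
    intro x hx
    obtain ⟨a, rfl⟩ := Submodule.mem_span_singleton.1 hx
    have : a = 0 ∨ a = 1 := z2_cases a
    rcases this with rfl | rfl <;> simp
  have h := count_lag hdim hB {v | Q v = 0} (fun i => 2 ^ i + 1)
    (by
      intro w hw u hu h
      simp only [Set.mem_ofPred_eq] at *
      rw [q_add hQ, hw, hu, h]; rfl)
    (by
      intro W m hW hWS hr
      have e := zero_count Q (Finset.univ.filter (fun v => v ∈ perpS B W))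
      rw [← char_sum hB hQ W (fun w hw => hWS hw), hs, card_filter_mem, finrank_perp hB, hdim,
        Finset.filter_filter] at e
      simp only [Set.mem_ofPred_eq]
      generalize Module.finrank (ZMod 2) W = k at *
      subst hr
      have : 2 * (k + m + 1) - k = k + m + 1 + (m + 1) := by omega
      rw [this] at e
      apply mul_left_cancel₀ (two_ne_zero : (2 : ℤ) ≠ 0)
      rw [e]; push_cast; ring)
    (J - 1) (Submodule.span (ZMod 2) {u})
    (by
      intro x hx
      rw [mem_perpS]
      intro y hy
      rcases hsp x hx with rfl | rfl <;> rcases hsp y hy with rfl | rfl <;> simp [hB.1])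
    (by
      intro x hx
      rcases hsp x hx with rfl | rfl
      · exact q_zero hQ
      · exact hQu)
    (by rw [finrank_span_singleton hu]; omega)
  rw [← h]
  congr 1
  ext L
  simp only [Set.mem_ofPred_eq, Submodule.span_singleton_le_iff_mem]
  rfl

theorem exists_rep {B : V →ₗ[ZMod 2] V →ₗ[ZMod 2] ZMod 2} (hB : IsSymplectic B)
    {Q : V → ZMod 2} (hQ : YieldsForm B Q) {L : Submodule (ZMod 2) V} (hL : L ≤ perpS B L) :
    ∃ a, ∀ x ∈ L, Q x = B a x := by
  let f : L →+ ZMod 2 :=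
    { toFun := fun x => Q x
      map_zero' := q_zero hQ
      map_add' := fun x y => by
        have : B x y = 0 := mem_perpS.1 (hL y.2) _ x.2
        rw [Submodule.coe_add, q_add hQ, this, add_zero] }
  obtain ⟨g, hg⟩ := LinearMap.exists_extend (f.toZModLinearMap 2)
  obtain ⟨a, ha⟩ := (LinearMap.BilinForm.toDual B (symp_nondeg hB)).surjective g
  refine ⟨a, fun x hx => ?_⟩
  have h1 := LinearMap.congr_fun hg ⟨x, hx⟩
  have h2 : B a x = g x := by rw [← ha]; rfl
  rw [h2]
  exact h1.symm

theorem sum_shift {B : V →ₗ[ZMod 2] V →ₗ[ZMod 2] ZMod 2}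
    {Q : V → ZMod 2} (hQ : YieldsForm B Q) (a : V) :
    ∑ v, chi (Q v + B a v) = chi (Q a) * ∑ v, chi (Q v) := by
  rw [← Equiv.sum_comp (Equiv.addLeft a) (fun v => chi (Q v)), Finset.mul_sum]
  refine Finset.sum_congr rfl fun v _ => ?_
  rw [← chi_add]
  simp only [Equiv.coe_addLeft]
  rw [q_add hQ]
  congr 1
  generalize Q v = x, Q a = y, B a v = z
  revert x y z; decide

theorem coset_inj {v v' : V} {L L' : Submodule (ZMod 2) V}
    (h : (fun x => v + x) '' (L : Set V) = (fun x => v' + x) '' (L' : Set V)) : L = L' := by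
  have hd : ∀ {v v' : V} {L L' : Submodule (ZMod 2) V},
    (fun x => v + x) '' (L : Set V) = (fun x => v' + x) '' (L' : Set V) → L ≤ L' := by
    intro v v' L L' h x hx
    have h1 : v + x ∈ (fun x => v' + x) '' (L' : Set V) := h ▸ ⟨x, hx, rfl⟩
    have h2 : v + 0 ∈ (fun x => v' + x) '' (L' : Set V) := h ▸ ⟨0, L.zero_mem, rfl⟩
    obtain ⟨a, ha, e1⟩ := h1
    obtain ⟨b, hb, e2⟩ := h2
    have : x = a - b := by
      simp only at e1 e2
      have : x = (v + x) - (v + 0) := by abel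
      rw [this, ← e1, ← e2]; abel
    rw [this]; exact L'.sub_mem ha hb
  exact le_antisymm (hd h) (hd h.symm)

theorem coset_eq {v v' : V} {L : Submodule (ZMod 2) V} (h : v' - v ∈ L) :
    (fun x => v + x) '' (L : Set V) = (fun x => v' + x) '' (L : Set V) := by
  ext y
  constructor
  · rintro ⟨x, hx, rfl⟩
    exact ⟨x - (v' - v), L.sub_mem hx h, by simp only; abel⟩
  · rintro ⟨x, hx, rfl⟩
    exact ⟨x + (v' - v), L.add_mem hx h, by simp only; abel⟩

end helpers

/-- For an affine quadric `D` of size `2^{J−1}(2^J+1)`, every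
Lagrangian subspace has exactly one coset contained in `D`; the affine
Lagrangian subspaces contained in `D` are as numerous as the Lagrangian
subspaces, namely `∏_{j=1}^{J}(2^j+1)`, each has cardinality `2^J`, and every
pair of distinct points of `D` lies in exactly `∏_{j=0}^{J−2}(2^j+1)` of them,
forming a BIBD with parameters `(2^{J−1}(2^J+1), 2^J, ∏_{j=0}^{J−2}(2^j+1))`. -/
theorem lagrangians_in_affine_quadric
    {J : ℕ} (hJ : 2 ≤ J)
    {V : Type*} [AddCommGroup V] [Module (ZMod 2) V] [Fintype V] [DecidableEq V]
    (hdim : Module.finrank (ZMod 2) V = 2 * J)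
    (B : V →ₗ[ZMod 2] V →ₗ[ZMod 2] ZMod 2) (hB : IsSymplectic B)
    (D : Set V) (hD : IsAffineQuadric B D)
    (hDcard : D.ncard = 2 ^ (J - 1) * (2 ^ J + 1)) :
    (∀ L : Submodule (ZMod 2) V, IsLagrangian B L →
      ∃! C : Set V, (∃ v : V, C = (fun x => v + x) '' (L : Set V)) ∧ C ⊆ D) ∧
    {L : Submodule (ZMod 2) V | IsLagrangian B L}.ncard =
      ∏ j ∈ Finset.Icc 1 J, (2 ^ j + 1) ∧
    {A ∈ affineLagrangians B | A ⊆ D}.ncard =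
      ∏ j ∈ Finset.Icc 1 J, (2 ^ j + 1) ∧
    (∀ A ∈ affineLagrangians B, A.ncard = 2 ^ J) ∧
    (∀ x ∈ D, ∀ y ∈ D, x ≠ y →
      {A ∈ affineLagrangians B | A ⊆ D ∧ x ∈ A ∧ y ∈ A}.ncard =
        ∏ j ∈ Finset.range (J - 1), (2 ^ j + 1)) := by
  obtain ⟨c, Q, hQ, hDQ⟩ : ∃ (c : ZMod 2) (Q : V → ZMod 2), YieldsForm B Q ∧
      ∀ v, v ∈ D ↔ Q v = c := by
    obtain ⟨Q, hQ, rfl | rfl⟩ := hD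
    · exact ⟨0, Q, hQ, fun v => Iff.rfl⟩
    · refine ⟨1, Q, hQ, fun v => ?_⟩
      simp only [quadric, Set.mem_compl_iff, Set.mem_ofPred_eq]
      generalize Q v = x
      revert x; decide
  have hsum : chi c * ∑ v, chi (Q v) = 2 ^ J := by
    have e := zero_count (fun v => Q v + c) (Finset.univ : Finset V)
    have hcard : (Finset.univ.filter (fun v => Q v + c = 0)).card =
        2 ^ (J - 1) * (2 ^ J + 1) := by
      rw [← hDcard, ← Set.ncard_coe_finset]
      congr 1
      ext v
      simp only [Finset.coe_filter, Finset.mem_univ, true_and, Set.mem_ofPred_eq, hDQ]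
      exact (by decide : ∀ x c : ZMod 2, x + c = 0 ↔ x = c) _ _
    have hV : (Finset.univ : Finset V).card = 2 ^ (2 * J) := by
      rw [Finset.card_univ, Module.card_eq_pow_finrank (K := ZMod 2), hdim, ZMod.card]
    simp only [chi_add] at e
    rw [hV, ← Finset.sum_mul] at e
    have hcard' : ((Finset.univ.filter (fun v => Q v + c = 0)).card : ℤ) =
        2 ^ (J - 1) * (2 ^ J + 1) := by rw [hcard]; push_cast; rfl
    have e' : 2 * ((2:ℤ) ^ (J - 1) * (2 ^ J + 1)) = 2 ^ (2 * J) + (∑ v, chi (Q v)) * chi c := by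
      rw [← hcard']
      convert e using 4
      push_cast; rfl
    obtain ⟨j, rfl⟩ : ∃ j, J = j + 1 := ⟨J - 1, by omega⟩
    simp only [Nat.add_sub_cancel] at e'
    rw [mul_comm]
    have : (2:ℤ) ^ (2 * (j + 1)) = 2 ^ (j + 1) * 2 ^ (j + 1) := by ring
    rw [this] at e'
    have : (2:ℤ) ^ (j + 1) = 2 * 2 ^ j := by ring
    nlinarith
  have hchi : ∀ a b : ZMod 2, chi a * chi b = 1 → a = b := by decide
  have hchi2 : ∀ a : ZMod 2, chi a = 1 ∨ chi a = -1 := by decide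
  have P1 : ∀ L : Submodule (ZMod 2) V, IsLagrangian B L →
      ∃! C : Set V, (∃ v : V, C = (fun x => v + x) '' (L : Set V)) ∧ C ⊆ D := by
    intro L hL
    classical
    have hLp := lag_iff.1 hL
    obtain ⟨a, ha⟩ := exists_rep hB hQ hLp.le
    have hQa : Q a = c := by
      have h1 := char_sum hB (q_shift hQ a) L (fun w hw => by
        simp only [ha w hw]; exact z2_add_self _)
      rw [sum_shift hQ a, ← hLp] at h1
      have h2 : ∑ v with v ∈ L, chi (Q v + B a v) = 2 ^ J := by
        rw [Finset.sum_congr rfl (g := fun _ => (1 : ℤ))]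
        · rw [Finset.sum_const, card_filter_mem, lag_finrank hdim hB hL]; simp
        · intro v hv
          rw [Finset.mem_filter] at hv
          rw [ha v hv.2, z2_add_self]; rfl
      have h3 : chi (Q a) * ∑ v, chi (Q v) = 2 ^ J := by
        rw [h1, ← h2]
      have hp : (0:ℤ) < 2 ^ J := by positivity
      apply hchi
      rcases hchi2 (Q a) with h | h <;> rcases hchi2 c with h' | h' <;>
        rw [h] at h3 ⊢ <;> rw [h'] at hsum ⊢ <;> first | (exfalso; linarith) | norm_num
    refine ⟨(fun x => a + x) '' (L : Set V), ⟨⟨a, rfl⟩, ?_⟩, ?_⟩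
    · rintro _ ⟨x, hx, rfl⟩
      rw [hDQ]
      simp only
      rw [q_add hQ, ha x hx, hQa, add_assoc, z2_add_self, add_zero]
    · rintro _ ⟨⟨v, rfl⟩, hv⟩
      apply coset_eq
      rw [hLp, mem_perpS]
      intro x hx
      have h0 : Q v = c := (hDQ _).1 (hv ⟨0, L.zero_mem, by simp⟩)
      have h1 : Q (v + x) = c := (hDQ _).1 (hv ⟨x, hx, rfl⟩)
      rw [q_add hQ, h0, ha x hx] at h1
      rw [symp_symm hB, map_sub, LinearMap.sub_apply]
      exact (by decide : ∀ c s t : ZMod 2, c + s + t = c → s - t = 0) _ _ _ h1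
  have P2 := count_all hdim hB
  refine ⟨P1, P2, ?_, ?_, ?_⟩
  · rw [← P2]
    symm
    refine Set.ncard_congr (fun L hL => (P1 L hL).choose) ?_ ?_ ?_
    · intro L hL
      obtain ⟨⟨⟨v, hv⟩, h2⟩, -⟩ := (P1 L hL).choose_spec
      exact ⟨⟨v, L, hL, hv⟩, h2⟩
    · intro L L' hL hL' h
      obtain ⟨⟨⟨v, hv⟩, -⟩, -⟩ := (P1 L hL).choose_spec
      obtain ⟨⟨⟨v', hv'⟩, -⟩, -⟩ := (P1 L' hL').choose_spec
      exact coset_inj (hv.symm.trans (h.trans hv'))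
    · rintro A ⟨⟨v, L, hL, hA⟩, hAD⟩
      exact ⟨L, hL, ((P1 L hL).choose_spec.2 A ⟨⟨v, hA⟩, hAD⟩).symm⟩
  · rintro _ ⟨v, L, hL, rfl⟩
    rw [Set.ncard_image_of_injective _ (add_right_injective v), ← lag_finrank hdim hB hL,
      ← card_sub]
    rfl
  · intro x hx y hy hxy
    have hQx := (hDQ x).1 hx
    have hQy := (hDQ y).1 hy
    have hu : y - x ≠ 0 := sub_ne_zero.2 hxy.symm
    have hs : ∑ v, chi (Q v + B x v) = 2 ^ J := by rw [sum_shift hQ, hQx, hsum]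
    have key : ∀ l, x + l ∈ D ↔ Q l + B x l = 0 := by
      intro l
      rw [hDQ, q_add hQ, hQx]
      exact (by decide : ∀ c s t : ZMod 2, c + s + t = c ↔ s + t = 0) _ _ _
    have hQu : Q (y - x) + B x (y - x) = 0 := by
      rw [← key]; simpa using hy
    have h := count_sing hdim hB (q_shift hQ x) hs (by omega) (y - x) hu hQu
    rw [← h]
    symm
    refine Set.ncard_congr (fun L _ => (fun l => x + l) '' (L : Set V)) ?_ ?_ ?_
    · rintro L ⟨hL, huL, hz⟩
      refine ⟨⟨x, L, hL, rfl⟩, ?_, ⟨0, L.zero_mem, by simp⟩, ⟨y - x, huL, by simp⟩⟩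
      rintro _ ⟨l, hl, rfl⟩
      exact (key l).2 (hz l hl)
    · intro L L' _ _ h
      exact coset_inj h
    · rintro _ ⟨⟨v, L, hL, rfl⟩, hAD, ⟨a, ha, hax⟩, ⟨b, hb, hby⟩⟩
      simp only at hax hby
      have hxv : x - v ∈ L := by rw [← hax]; simpa using ha
      have e := coset_eq hxv
      refine ⟨L, ⟨hL, ?_, ?_⟩, e.symm⟩
      · rw [← hax, ← hby, add_sub_add_left_eq_sub]; exact L.sub_mem hb ha
      · intro l hl
        apply (key l).1
        apply hAD
        rw [e]; exact ⟨l, hl, rfl⟩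
end
end
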